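/- For every λ ∈ ℝ, every E ∈ ℂ, and every finite word w = w_1…w_n over {0,1}, the norms of the transfer matrices over w and over its reversal w^R = w_n…w_1 coincide: ‖M(λ,E,w)‖ = ‖M(λ,E,w^R)‖. -/

import Mathlib

open scoped Classical

noncomputable section

/-- The Sturmian potential `v_{α,θ}(n) = χ_{[1-α,1)}(nα + θ mod 1)`. -/
def sturmian (α θ : ℝ) (n : ℤ) : ℝ :=
  if Int.fract (n * α + θ) ∈ Set.Ico (1 - α) 1 then 1 else 0

/-- Iterates of the Gauss map, starting at `α`. -/
def cfGauss (α : ℝ) : ℕ → ℝ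
  | 0 => α
  | n + 1 => Int.fract (cfGauss α n)⁻¹

/-- The continued fraction coefficients `a_n` of `α = [a_1, a_2, …]` (for `n ≥ 1`):
`a_1 = ⌊1/α⌋`, `a_2 = ⌊1/fract(1/α)⌋`, … . -/
def cfCoeff (α : ℝ) (n : ℕ) : ℕ := ⌊(cfGauss α (n - 1))⁻¹⌋₊

/-- The standard words, with an index shift: `sWord a n` is `s_{n-1}`.  Thus
`sWord a 0 = s_{-1} = 1`, `sWord a 1 = s_0 = 0`, `sWord a 2 = s_1 = 0^{a_1 - 1} 1`, and
`sWord a (n+1) = s_n = s_{n-1}^{a_n} s_{n-2}` for `n ≥ 2`. -/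
def sWord (a : ℕ → ℕ) : ℕ → List ℝ
  | 0 => [1]
  | 1 => [0]
  | 2 => List.replicate (a 1 - 1) (0 : ℝ) ++ [1]
  | n + 3 => (List.replicate (a (n + 2)) (sWord a (n + 2))).flatten ++ sWord a (n + 1)

/-- The `n`-th letter (for `n ≥ 1`) of the one-sided infinite word `c_α = lim s_n`:
since `|s_n| ≥ n`, it is the `n`-th letter of `s_n`. -/
def cword (α : ℝ) (n : ℕ) : ℝ := (sWord (cfCoeff α) (n + 1)).getD (n - 1) 0

/-- `w` is a (finite) prefix of the one-sided infinite word `c_α`. -/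
def IsPrefC (α : ℝ) (w : List ℝ) : Prop :=
  w = (List.range w.length).map fun i => cword α (i + 1)

/-- The one-step transfer matrix `T(λ,E,a) = [[E - λa, -1], [1, 0]]`. -/
def transferT (lam : ℝ) (E : ℂ) (a : ℝ) : Matrix (Fin 2) (Fin 2) ℂ :=
  !![E - lam * a, -1; 1, 0]

/-- The transfer matrix over a word `w = w_1 … w_n`:
`M(λ,E,w) = T(λ,E,w_n) ⋯ T(λ,E,w_1)`. -/
def transferM (lam : ℝ) (E : ℂ) : List ℝ → Matrix (Fin 2) (Fin 2) ℂ
  | [] => 1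
  | a :: w => transferM lam E w * transferT lam E a

/-- The operator norm on `ℂ²` (with the euclidean norm) of a `2 × 2` complex matrix. -/
def opNorm (A : Matrix (Fin 2) (Fin 2) ℂ) : ℝ :=
  ‖Matrix.toEuclideanCLM (𝕜 := ℂ) A‖

/-- The word `v_{α,θ}^n = v_{α,θ}(1) … v_{α,θ}(n)`. -/
def sturmianWord (α θ : ℝ) (n : ℕ) : List ℝ :=
  (List.range n).map fun k => sturmian α θ (k + 1)

/-- The set of finite nonempty subwords of a two-sided sequence `v : ℤ → ℝ`. -/
def SubZ (v : ℤ → ℝ) : Set (List ℝ) :=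
  {w | w ≠ [] ∧ ∃ k : ℤ, w = (List.range w.length).map fun i => v (k + i)}

/-- The set of finite nonempty subwords of the one-sided word `c_α` (indexed from `1`). -/
def SubC (α : ℝ) : Set (List ℝ) :=
  {w | w ≠ [] ∧ ∃ k : ℕ, 1 ≤ k ∧ w = (List.range w.length).map fun i => cword α (k + i)}

/-- `W_α`, the set of all finite nonempty subwords of the sequences `v_{α,θ}`, `θ ∈ [0,1)`. -/
def Walpha (α : ℝ) : Set (List ℝ) :=
  {w | ∃ θ ∈ Set.Ico (0 : ℝ) 1, w ∈ SubZ (sturmian α θ)}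

/-- `α` is a bounded density number: `limsup_{n→∞} (1/n) ∑_{j=1}^n a_j < ∞` for the
continued fraction coefficients `a_j` of `α`. -/
def BoundedDensity (α : ℝ) : Prop :=
  Filter.IsBoundedUnder (· ≤ ·) Filter.atTop
    (fun n : ℕ => (1 / n : ℝ) * ∑ j ∈ Finset.Icc 1 n, (cfCoeff α j : ℝ))

end

section revproof
open Matrix
open scoped Matrix.Norms.L2Operator

/-- The diagonal sign matrix `diag(1,-1)`. -/
def signD : Matrix (Fin 2) (Fin 2) ℂ := Matrix.diagonal ![1, -1]

lemma signD_mul_self : signD * signD = 1 := by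
  ext i j
  fin_cases i <;> fin_cases j <;> simp [signD]

lemma norm_signD_le : ‖signD‖ ≤ 1 := by
  rw [signD, Matrix.l2_opNorm_diagonal, pi_norm_le_iff_of_nonneg zero_le_one]
  intro i
  fin_cases i <;> simp

lemma opNorm_eq (A : Matrix (Fin 2) (Fin 2) ℂ) : opNorm A = ‖A‖ := rfl

lemma norm_map_star_le (A : Matrix (Fin 2) (Fin 2) ℂ) : ‖A.map star‖ ≤ ‖A‖ := by
  rw [← opNorm_eq (A.map star)]
  refine ContinuousLinearMap.opNorm_le_bound _ (norm_nonneg _) fun x => ?_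
  have h := Matrix.l2_opNorm_mulVec A (WithLp.toLp 2 (star (WithLp.ofLp x)))
  have h1 : ‖(WithLp.toLp 2 (star (WithLp.ofLp x)) : EuclideanSpace ℂ (Fin 2))‖ = ‖x‖ := by
    simp [EuclideanSpace.norm_eq]
  rw [h1] at h
  refine le_of_eq_of_le ?_ h
  have h2 : (A.map star) *ᵥ (WithLp.ofLp x) = star (A *ᵥ star (WithLp.ofLp x)) := by
    ext i
    fin_cases i <;> simp [Matrix.mulVec, dotProduct]
  rw [EuclideanSpace.norm_eq, EuclideanSpace.norm_eq]
  simp only [Matrix.ofLp_toEuclideanCLM, h2, Pi.star_apply, norm_star]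
  rfl

lemma norm_transpose_le (A : Matrix (Fin 2) (Fin 2) ℂ) : ‖Aᵀ‖ ≤ ‖A‖ := by
  have h := norm_map_star_le Aᴴ
  rw [Matrix.l2_opNorm_conjTranspose] at h
  have h2 : Aᴴ.map star = Aᵀ := by
    ext i j
    simp
  rwa [h2] at h

lemma transferM_append (lam : ℝ) (E : ℂ) (u v : List ℝ) :
    transferM lam E (u ++ v) = transferM lam E v * transferM lam E u := by
  induction u with
  | nil => simp [transferM]
  | cons a u ih => simp [transferM, ih, Matrix.mul_assoc]

lemma transferT_transpose (lam : ℝ) (E : ℂ) (a : ℝ) :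
    signD * (transferT lam E a)ᵀ * signD = transferT lam E a := by
  ext i j
  fin_cases i <;> fin_cases j <;> simp [signD, transferT]

lemma transferM_reverse (lam : ℝ) (E : ℂ) (w : List ℝ) :
    transferM lam E w.reverse = signD * (transferM lam E w)ᵀ * signD := by
  induction w with
  | nil => simp [transferM, signD_mul_self]
  | cons a w ih =>
    rw [List.reverse_cons, transferM_append, ih]
    simp only [transferM, Matrix.transpose_mul, Matrix.one_mul]
    calc _ = (signD * (transferT lam E a)ᵀ * signD)
          * (signD * (transferM lam E w)ᵀ * signD) := by rw [transferT_transpose]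
      _ = signD * (transferT lam E a)ᵀ * (signD * signD) * (transferM lam E w)ᵀ * signD := by
          simp only [Matrix.mul_assoc]
      _ = _ := by rw [signD_mul_self]; simp only [Matrix.mul_assoc, Matrix.one_mul]

lemma opNorm_reverse_le (lam : ℝ) (E : ℂ) (w : List ℝ) :
    opNorm (transferM lam E w.reverse) ≤ opNorm (transferM lam E w) := by
  rw [opNorm_eq, opNorm_eq, transferM_reverse]
  calc _ ≤ ‖signD‖ * ‖(transferM lam E w)ᵀ‖ * ‖signD‖ :=
        (norm_mul_le _ _).trans
          (mul_le_mul_of_nonneg_right (norm_mul_le _ _) (norm_nonneg _))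
    _ ≤ 1 * ‖transferM lam E w‖ * 1 := by
        gcongr
        · exact norm_signD_le
        · exact norm_transpose_le _
        · exact norm_signD_le
    _ = _ := by ring

end revproof

theorem transferM_norm_reverse (lam : ℝ) (E : ℂ) (w : List ℝ)
    (hw : ∀ a ∈ w, a = 0 ∨ a = 1) :
    opNorm (transferM lam E w) = opNorm (transferM lam E w.reverse) := by
  apply le_antisymm
  · have h := opNorm_reverse_le lam E w.reverse
    rwa [List.reverse_reverse] at h
  · exact opNorm_reverse_le lam E w
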